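/- Let conditions A and B hold. Suppose that for some family of initial distributions q̄_ε the first-rare-event times ξ_ε converge in distribution as ε → 0 to a proper (almost surely finite) nonnegative random variable. Then for every i ∈ X and every δ > 0, P_i(κ_{ε,1} > δ) → 0 as ε → 0; equivalently, φ_{ε,i}(s) = E_i e^{−sκ_{ε,1}} → 1 as ε → 0 for every s ≥ 0 and i ∈ X. -/

import Mathlib

open MeasureTheory Filter Set
open scoped Topology ENNReal

noncomputable section

/-- Condition B: there exists a ring chain of states `c 0, c 1, …, c N = c 0`
containing all states of the phase space, with
`liminf_{ε→0+} p ε (c (k-1)) (c k) > 0` for `k = 1, …, N`. -/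
def CondB {m : ℕ} (p : ℝ → Fin m → Fin m → ℝ) : Prop :=
  ∃ N : ℕ, 0 < N ∧ ∃ c : ℕ → Fin m, c N = c 0 ∧
    (∀ i : Fin m, ∃ k ≤ N, c k = i) ∧
    ∀ k < N, 0 < Filter.liminf (fun ε => p ε (c k) (c (k + 1))) (𝓝[>] (0 : ℝ))

/-- `π` is a stationary distribution of the transition matrix `p`. -/
def IsStationaryDist {m : ℕ} (p : Fin m → Fin m → ℝ) (π : Fin m → ℝ) : Prop :=
  (∀ i, 0 ≤ π i) ∧ (∑ i, π i = 1) ∧ ∀ j, π j = ∑ i, π i * p i j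

/-- `p_{ε,i} = P_i(ζ_{ε,1} = 1)`, the probability of occurrence of the rare event during
one transition step, starting from state `i`. -/
def rareP {m : ℕ} {Ω : Type} [MeasurableSpace Ω]
    (Pstart : ℝ → Fin m → Measure Ω) (ζ : ℝ → ℕ → Ω → Bool) (ε : ℝ) (i : Fin m) : ℝ :=
  (Pstart ε i {ω | ζ ε 1 ω = true}).toReal

/-- `p_ε = Σ_i π_{ε,i} p_{ε,i}`, the stationary average of the rare-event probabilities. -/
def avgRare {m : ℕ} {Ω : Type} [MeasurableSpace Ω]
    (Pstart : ℝ → Fin m → Measure Ω) (ζ : ℝ → ℕ → Ω → Bool) (π : ℝ → Fin m → ℝ)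
    (ε : ℝ) : ℝ :=
  ∑ i, π ε i * rareP Pstart ζ ε i

/-- `φ_ε(s) = Σ_i π_{ε,i} E_i e^{−sκ_{ε,1}}`, the stationary average of the Laplace
transforms of the sojourn times. -/
def lapPhi {m : ℕ} {Ω : Type} [MeasurableSpace Ω]
    (Pstart : ℝ → Fin m → Measure Ω) (κ : ℝ → ℕ → Ω → ℝ) (π : ℝ → Fin m → ℝ)
    (ε s : ℝ) : ℝ :=
  ∑ i, π ε i * ∫ ω, Real.exp (-(s * κ ε 1 ω)) ∂(Pstart ε i)

/-- `ν_ε = min{n ≥ 1 : ζ_{ε,n} = 1}`, the number of steps until the first rare event. -/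
def nuRE {Ω : Type} (ζ : ℝ → ℕ → Ω → Bool) (ε : ℝ) (ω : Ω) : ℕ :=
  sInf {n : ℕ | 1 ≤ n ∧ ζ ε n ω = true}

/-- `ξ_ε = Σ_{n=1}^{ν_ε} κ_{ε,n}`, the first-rare-event time. -/
def xiRE {Ω : Type} (κ : ℝ → ℕ → Ω → ℝ) (ζ : ℝ → ℕ → Ω → Bool) (ε : ℝ) (ω : Ω) : ℝ :=
  ∑ n ∈ Finset.Icc 1 (nuRE ζ ε ω), κ ε n ω

/- Let `u i = E_i exp (-s ξ)`, let `φ i` be the Laplace transform at `s` of the sojourn time in `i`,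
and let `r` bound the one-step probabilities of the rare event. Conditioning on the first step gives
both `u i ≤ r + ∑ j, p i j * u j` and `u i ≤ r + φ i * max u`. The first inequality makes `u` almost
harmonic for the embedded chain, so by the ring chain it is constant up to `O(r)`; with the second,
`(1 - φ i) * max u = O(r)`. Convergence in distribution of `ξ` to a finite limit keeps `max u` away
from `0`, hence `φ i → 1` as `r → 0`. The same maximum principle with `r = 0`, applied to
`u i = P_i(the rare event never occurs)`, shows that `ξ` is almost surely finite for each `ε`. -/

section Laplace

variable {Ω : Type*} [MeasurableSpace Ω] {ν : Measure Ω} {Y : Ω → ℝ} {s t δ : ℝ}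

theorem exp_neg_mul_le_one (hs : 0 ≤ s) (ht : 0 ≤ t) : Real.exp (-(s * t)) ≤ 1 :=
  Real.exp_le_one_iff.2 (neg_nonpos.2 (mul_nonneg hs ht))

theorem integrable_exp_neg_mul [IsFiniteMeasure ν] (hY : AEMeasurable Y ν) (hY0 : 0 ≤ᵐ[ν] Y)
    (hs : 0 ≤ s) : Integrable (fun ω => Real.exp (-(s * Y ω))) ν :=
  Integrable.of_mem_Icc 0 1 (by fun_prop)
    (hY0.mono fun _ hω => ⟨Real.exp_nonneg _, exp_neg_mul_le_one hs hω⟩)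

theorem integral_exp_neg_mul_le_one [IsProbabilityMeasure ν] (hY : AEMeasurable Y ν)
    (hY0 : 0 ≤ᵐ[ν] Y) (hs : 0 ≤ s) : ∫ ω, Real.exp (-(s * Y ω)) ∂ν ≤ 1 :=
  calc ∫ ω, Real.exp (-(s * Y ω)) ∂ν ≤ ∫ _, 1 ∂ν :=
        integral_mono_ae (integrable_exp_neg_mul hY hY0 hs) (integrable_const 1)
          (hY0.mono fun _ hω => exp_neg_mul_le_one hs hω)
    _ = 1 := by simp only [integral_const, probReal_univ, one_smul]

theorem mul_measureReal_lt_le_one_sub_laplace [IsProbabilityMeasure ν] (hY : Measurable Y)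
    (hY0 : 0 ≤ᵐ[ν] Y) (hs : 0 ≤ s) :
    (1 - Real.exp (-(s * δ))) * ν.real {ω | δ < Y ω} ≤ 1 - ∫ ω, Real.exp (-(s * Y ω)) ∂ν := by
  have hint := integrable_exp_neg_mul hY.aemeasurable hY0 hs
  have htail : MeasurableSet {ω | δ < Y ω} := measurableSet_lt measurable_const hY
  calc (1 - Real.exp (-(s * δ))) * ν.real {ω | δ < Y ω}
      = ∫ ω, {ω | δ < Y ω}.indicator (fun _ => 1 - Real.exp (-(s * δ))) ω ∂ν := by
        rw [integral_indicator_const _ htail, smul_eq_mul, mul_comm]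
    _ ≤ ∫ ω, 1 - Real.exp (-(s * Y ω)) ∂ν := by
        refine integral_mono_ae ((integrable_const _).indicator htail)
          ((integrable_const 1).sub hint) (hY0.mono fun ω hω => ?_)
        obtain htail | htail := lt_or_ge δ (Y ω)
        · rw [indicator_of_mem (by exact htail)]
          beta_reduce
          gcongr
        · rw [indicator_of_notMem (by exact htail.not_gt)]
          exact sub_nonneg.2 (exp_neg_mul_le_one hs hω)
    _ = 1 - ∫ ω, Real.exp (-(s * Y ω)) ∂ν := by
        rw [integral_sub (integrable_const 1) hint, integral_const, probReal_univ, one_smul]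

theorem one_sub_laplace_le_mul [IsProbabilityMeasure ν] (hY : AEMeasurable Y ν)
    (hY0 : 0 ≤ᵐ[ν] Y) (hs : 0 ≤ s) (ht : 0 ≤ t) {n : ℕ} (htn : t ≤ n * s) :
    1 - ∫ ω, Real.exp (-(t * Y ω)) ∂ν ≤ n * (1 - ∫ ω, Real.exp (-(s * Y ω)) ∂ν) := by
  have hs_int := integrable_exp_neg_mul hY hY0 hs
  have hbernoulli : ∀ y : ℝ, 0 ≤ y →
      1 + n * (Real.exp (-(s * y)) - 1) ≤ Real.exp (-(t * y)) := fun y hy =>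
    calc 1 + n * (Real.exp (-(s * y)) - 1) ≤ (1 + (Real.exp (-(s * y)) - 1)) ^ n :=
          one_add_mul_le_pow (by linarith [Real.exp_nonneg (-(s * y))]) n
      _ = Real.exp (-(n * s * y)) := by
          rw [add_sub_cancel, ← Real.exp_nat_mul]
          ring_nf
      _ ≤ Real.exp (-(t * y)) := by gcongr
  have hsub : Integrable (fun ω => n * (Real.exp (-(s * Y ω)) - 1)) ν :=
    (hs_int.sub (integrable_const 1)).const_mul _
  have hmono := integral_mono_ae ((integrable_const 1).add hsub)
    (integrable_exp_neg_mul hY hY0 ht) (hY0.mono fun ω hω => hbernoulli (Y ω) hω)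
  simp only [Pi.add_apply] at hmono
  rw [integral_add (integrable_const 1) hsub, integral_const_mul,
    integral_sub hs_int (integrable_const 1)] at hmono
  simp only [integral_const, probReal_univ, one_smul] at hmono
  linarith

theorem integral_exp_neg_mul_pos [IsProbabilityMeasure ν] (hY : AEMeasurable Y ν)
    (hY0 : 0 ≤ᵐ[ν] Y) (hs : 0 ≤ s) : 0 < ∫ ω, Real.exp (-(s * Y ω)) ∂ν :=
  integral_exp_pos (integrable_exp_neg_mul hY hY0 hs)

theorem exists_eventually_le_laplace {ι : Type*} {l : Filter ι} {ν : ι → Measure Ω}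
    {Y : ι → Ω → ℝ} {μ : Measure ℝ} [IsProbabilityMeasure μ]
    (hμ : μ (Iio 0) = 0)
    (hconv : ∀ s > 0, Tendsto (fun a => ∫ ω, Real.exp (-(s * Y a ω)) ∂ν a) l
      (𝓝 (∫ x, Real.exp (-(s * x)) ∂μ))) :
    ∃ s > 0, ∃ L > 0, ∀ᶠ a in l, L ≤ ∫ ω, Real.exp (-(s * Y a ω)) ∂ν a := by
  have hnonneg : 0 ≤ᵐ[μ] id :=
    (measure_eq_zero_iff_ae_notMem.1 hμ).mono fun _ hx => not_lt.1 hx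
  obtain ⟨L, hL0, hL⟩ := exists_between
    (integral_exp_neg_mul_pos aemeasurable_id hnonneg zero_le_one)
  exact ⟨1, one_pos, L, hL0, (hconv 1 one_pos).eventually_const_le hL⟩

section Family

variable {ι : Type*} {l : Filter ι} {ν : ι → Measure Ω} {Y : ι → Ω → ℝ}
  (hν : ∀ᶠ a in l, IsProbabilityMeasure (ν a) ∧ Measurable (Y a) ∧ 0 ≤ᵐ[ν a] Y a) (hs : 0 < s)
  (hlap : Tendsto (fun a => ∫ ω, Real.exp (-(s * Y a ω)) ∂ν a) l (𝓝 1))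

include hν hs hlap

theorem tendsto_measureReal_lt_of_tendsto_laplace (hδ : 0 < δ) :
    Tendsto (fun a => (ν a).real {ω | δ < Y a ω}) l (𝓝 0) := by
  have hgap : 0 < 1 - Real.exp (-(s * δ)) :=
    sub_pos.2 (Real.exp_lt_one_iff.2 (neg_neg_of_pos (mul_pos hs hδ)))
  have hbound : Tendsto (fun a => (1 - ∫ ω, Real.exp (-(s * Y a ω)) ∂ν a) /
      (1 - Real.exp (-(s * δ)))) l (𝓝 0) := by
    simpa using (hlap.const_sub 1).div_const (1 - Real.exp (-(s * δ)))
  refine squeeze_zero' (.of_forall fun _ => measureReal_nonneg) (hν.mono fun a ha => ?_) hbound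
  obtain ⟨_, hY, hY0⟩ := ha
  exact (le_div_iff₀' hgap).2 (mul_measureReal_lt_le_one_sub_laplace hY hY0 hs.le)

theorem tendsto_laplace_of_tendsto_laplace (ht : 0 ≤ t) :
    Tendsto (fun a => ∫ ω, Real.exp (-(t * Y a ω)) ∂ν a) l (𝓝 1) := by
  obtain ⟨n, hn⟩ := exists_nat_ge (t / s)
  have hlower : Tendsto (fun a => 1 - n * (1 - ∫ ω, Real.exp (-(s * Y a ω)) ∂ν a)) l (𝓝 1) := by
    simpa using ((hlap.const_sub 1).const_mul (n : ℝ)).const_sub 1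
  refine tendsto_of_tendsto_of_tendsto_of_le_of_le' hlower tendsto_const_nhds
    (hν.mono fun a ha => ?_) (hν.mono fun a ha => ?_) <;> obtain ⟨_, hY, hY0⟩ := ha
  · exact sub_le_comm.1 (one_sub_laplace_le_mul hY.aemeasurable hY0 hs.le ht
      ((div_le_iff₀ hs).1 hn))
  · exact integral_exp_neg_mul_le_one hY.aemeasurable hY0 ht

end Family

end Laplace

/-- The ring chain of condition B at a fixed parameter: a closed chain of `N` steps through all
states whose steps all have weight at least `C`. -/
def HasRingChain {X : Type*} (p : X → X → ℝ) (C : ℝ) (N : ℕ) : Prop :=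
  ∃ c : ℕ → X, c N = c 0 ∧ (∀ i, ∃ k ≤ N, c k = i) ∧ ∀ k < N, C ≤ p (c k) (c (k + 1))

theorem CondB.exists_eventually_hasRingChain {m : ℕ} {p : ℝ → Fin m → Fin m → ℝ} (hB : CondB p)
    (hp : ∀ᶠ ε in 𝓝[>] (0 : ℝ), ∀ i j, 0 ≤ p ε i j) :
    ∃ N : ℕ, ∃ C > 0, C ≤ 1 ∧ ∀ᶠ ε in 𝓝[>] (0 : ℝ), HasRingChain (p ε) C N := by
  obtain ⟨N, -, c, hclosed, hcover, hlim⟩ := hB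
  obtain ⟨C, hC, hC0, hC1⟩ : ∃ C, (∀ k ∈ Finset.range N,
      C < liminf (fun ε => p ε (c k) (c (k + 1))) (𝓝[>] (0 : ℝ))) ∧ 0 < C ∧ C ≤ 1 := by
    refine (((eventually_all_finset (l := 𝓝[>] (0 : ℝ)) _).2 fun k hk => ?_).and
      (Ioc_mem_nhdsGT one_pos)).exists
    exact mem_nhdsWithin_of_mem_nhds (Iio_mem_nhds (hlim k (Finset.mem_range.1 hk)))
  refine ⟨N, C, hC0, hC1, ?_⟩
  have hsteps : ∀ᶠ ε in 𝓝[>] (0 : ℝ), ∀ k ∈ Finset.range N, C < p ε (c k) (c (k + 1)) :=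
    (eventually_all_finset _).2 fun k hk => eventually_lt_of_lt_liminf (hC k hk)
      (isBoundedUnder_of_eventually_ge (hp.mono fun ε h => h (c k) (c (k + 1))))
  filter_upwards [hsteps] with ε hε
  exact ⟨c, hclosed, hcover, fun k hk => (hε k (Finset.mem_range.2 hk)).le⟩

theorem pow_mul_le_add_mul_of_chain {C r : ℝ} (hC0 : 0 ≤ C) (hC1 : C ≤ 1) (hr : 0 ≤ r)
    {w : ℕ → ℝ} {l : ℕ} (h : ∀ k < l, C * w (k + 1) ≤ w k + r) : C ^ l * w l ≤ w 0 + l * r := by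
  induction l with
  | zero => simp
  | succ l ih =>
    calc C ^ (l + 1) * w (l + 1) = C ^ l * (C * w (l + 1)) := by ring
      _ ≤ C ^ l * (w l + r) := by gcongr; exact h l l.lt_succ_self
      _ = C ^ l * w l + C ^ l * r := by ring
      _ ≤ w 0 + l * r + 1 * r := by
        gcongr
        · exact ih fun k hk => h k (hk.trans l.lt_succ_self)
        · exact pow_le_one₀ hC0 hC1
      _ = w 0 + (l + 1 : ℕ) * r := by push_cast; ring

section RingChain

variable {X : Type*} {p : X → X → ℝ} {C r : ℝ} {N : ℕ}

theorem HasRingChain.pow_mul_le (hring : HasRingChain p C N) (hC0 : 0 ≤ C) (hC1 : C ≤ 1)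
    (hr : 0 ≤ r) {w : X → ℝ} (hw : ∀ i, 0 ≤ w i) (h : ∀ i j, p i j * w j ≤ w i + r) (i j : X) :
    C ^ (2 * N) * w j ≤ w i + 2 * N * r := by
  obtain ⟨c, hclosed, hcover, hstep⟩ := hring
  have hdecay : ∀ k < N, C * w (c (k + 1)) ≤ w (c k) + r := fun k hk =>
    (mul_le_mul_of_nonneg_right (hstep k hk) (hw _)).trans (h _ _)
  have hsegment : ∀ a l, a + l ≤ N → C ^ N * w (c (a + l)) ≤ w (c a) + N * r := fun a l hal =>
    calc C ^ N * w (c (a + l)) ≤ C ^ l * w (c (a + l)) :=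
          mul_le_mul_of_nonneg_right (pow_le_pow_of_le_one hC0 hC1 (by omega)) (hw _)
      _ ≤ w (c a) + l * r := pow_mul_le_add_mul_of_chain hC0 hC1 hr (w := fun k => w (c (a + k)))
          fun k hk => hdecay (a + k) (by omega)
      _ ≤ w (c a) + N * r := by gcongr; omega
  obtain ⟨a, ha, rfl⟩ := hcover i
  obtain ⟨b, hb, rfl⟩ := hcover j
  -- The path from `c a` to `c b` runs through `c N = c 0`.
  have htail : C ^ N * w (c 0) ≤ w (c a) + N * r := by
    simpa only [Nat.add_sub_cancel' ha, hclosed] using hsegment a (N - a) (by omega)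
  have hhead : C ^ N * w (c b) ≤ w (c 0) + N * r := by
    simpa only [zero_add] using hsegment 0 b (by omega)
  calc C ^ (2 * N) * w (c b) = C ^ N * (C ^ N * w (c b)) := by ring
    _ ≤ C ^ N * (w (c 0) + N * r) := by gcongr
    _ = C ^ N * w (c 0) + C ^ N * (N * r) := by ring
    _ ≤ w (c a) + N * r + 1 * (N * r) := by gcongr; exact pow_le_one₀ hC0 hC1
    _ = w (c a) + 2 * N * r := by ring

/- The deficit `M - u` from the maximum `M` vanishes somewhere, hence is small everywhere, while at
`i₀` it is at least `(1 - φ) * M - r`. -/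
theorem HasRingChain.maximum_principle [Fintype X] (hring : HasRingChain p C N) (hC0 : 0 ≤ C)
    (hC1 : C ≤ 1) (hr : 0 ≤ r) (hp0 : ∀ i j, 0 ≤ p i j) (hp1 : ∀ i, ∑ j, p i j = 1)
    {u : X → ℝ} (hu : ∀ i, u i ≤ r + ∑ j, p i j * u j) {i₀ : X} {φ : ℝ} (hφ : φ ≤ 1)
    (hi₀ : ∀ M, (∀ j, u j ≤ M) → u i₀ ≤ r + φ * M) (j : X) :
    C ^ (2 * N) * (1 - φ) * u j ≤ (2 * N + 1) * r := by
  have : Nonempty X := ⟨i₀⟩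
  obtain ⟨jmax, hjmax⟩ := Finite.exists_max u
  have hdeficit : ∀ i k, p i k * (u jmax - u k) ≤ u jmax - u i + r := fun i k =>
    calc p i k * (u jmax - u k) ≤ ∑ l, p i l * (u jmax - u l) :=
          Finset.single_le_sum (f := fun l => p i l * (u jmax - u l))
            (fun l _ => mul_nonneg (hp0 i l) (sub_nonneg.2 (hjmax l))) (Finset.mem_univ k)
      _ = u jmax - ∑ l, p i l * u l := by
          simp only [mul_sub, Finset.sum_sub_distrib, ← Finset.sum_mul, hp1, one_mul]
      _ ≤ u jmax - u i + r := by linarith [hu i]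
  have hsmall := hring.pow_mul_le hC0 hC1 hr (fun i => sub_nonneg.2 (hjmax i)) hdeficit jmax i₀
  calc C ^ (2 * N) * (1 - φ) * u j ≤ C ^ (2 * N) * (1 - φ) * u jmax := by
        have := sub_nonneg.2 hφ
        gcongr
        exact hjmax j
    _ = C ^ (2 * N) * ((1 - φ) * u jmax - r) + C ^ (2 * N) * r := by ring
    _ ≤ C ^ (2 * N) * (u jmax - u i₀) + 1 * r :=
        add_le_add
          (mul_le_mul_of_nonneg_left (by linarith [hi₀ _ hjmax]) (pow_nonneg hC0 _))
          (mul_le_mul_of_nonneg_right (pow_le_one₀ hC0 hC1) hr)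
    _ ≤ (2 * N + 1) * r := by linarith

end RingChain

section Sequences

variable {E : Type*} [MeasurableSpace E]

theorem measurableSet_forall_lt_mem {s : ℕ → Set E} (hs : ∀ k, MeasurableSet (s k)) (n : ℕ) :
    MeasurableSet {x : ℕ → E | ∀ k < n, x k ∈ s k} := by
  measurability

theorem measure_ext_of_forall_lt_mem {C : Set (Set E)}
    (hgen : MeasurableSpace.generateFrom C = ‹_›) (hpi : IsPiSystem C)
    (hspan : IsCountablySpanning C) {μ ν : Measure (ℕ → E)} [IsFiniteMeasure μ] [IsFiniteMeasure ν]
    (h : ∀ (n : ℕ) (s : ℕ → Set E), (∀ k, s k ∈ C) →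
      μ {x | ∀ k < n, x k ∈ s k} = ν {x | ∀ k < n, x k ∈ s k}) : μ = ν := by
  obtain ⟨t, ht, -⟩ := id hspan
  have hmap_range : ∀ n, μ.map (Finset.range n).restrict = ν.map (Finset.range n).restrict := by
    intro n
    have hrestrict : Measurable (Finset.restrict (π := fun _ => E) (Finset.range n)) :=
      Finset.measurable_restrict _
    refine ext_of_generate_finite _ (generateFrom_eq_pi (fun _ => hgen) fun _ => hspan).symm
      (IsPiSystem.pi fun _ => hpi) ?_ ?_
    · rintro _ ⟨s, hs, rfl⟩
      have hs_mem : ∀ k, s k ∈ C := fun k => hs k (mem_univ k)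
      have hs_meas : MeasurableSet (univ.pi s) := .univ_pi fun k =>
        hgen ▸ MeasurableSpace.measurableSet_generateFrom (hs_mem k)
      let S : ℕ → Set E := fun k => if hk : k ∈ Finset.range n then s ⟨k, hk⟩ else t 0
      have hS : ∀ k, S k ∈ C := fun k => by
        by_cases hk : k ∈ Finset.range n <;> simp only [S, hk, dite_true, dite_false, hs_mem, ht]
      have hpreimage :
          (Finset.range n).restrict ⁻¹' univ.pi s = {x : ℕ → E | ∀ k < n, x k ∈ S k} := by
        ext x
        simp +contextual [S, Set.mem_pi]
      rw [Measure.map_apply hrestrict hs_meas, Measure.map_apply hrestrict hs_meas, hpreimage,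
        h n S hS]
    · simpa [Measure.map_apply hrestrict] using h 0 t ht
  have hμ : IsProjectiveLimit μ fun I => ν.map I.restrict := fun I => by
    change μ.map I.restrict = ν.map I.restrict
    obtain ⟨n, hn⟩ := I.exists_nat_subset_range
    have hrestrict := Finset.measurable_restrict₂ (X := fun _ : ℕ => E) hn
    rw [← Finset.restrict₂_comp_restrict hn, ← Measure.map_map hrestrict (by fun_prop),
      ← Measure.map_map hrestrict (by fun_prop), hmap_range]
  exact hμ.unique fun _ => rfl

end Sequences

section SeqCons

variable {E : Type*}

/-- The sequence `e, x 0, x 1, …`. -/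
def seqCons (e : E) (x : ℕ → E) : ℕ → E
  | 0 => e
  | n + 1 => x n

@[simp]
theorem seqCons_zero (e : E) (x : ℕ → E) : seqCons e x 0 = e := rfl

@[simp]
theorem seqCons_succ (e : E) (x : ℕ → E) (n : ℕ) : seqCons e x (n + 1) = x n := rfl

theorem seqCons_head_tail (x : ℕ → E) : seqCons (x 0) (fun n => x (n + 1)) = x :=
  funext fun n => by cases n <;> rfl

theorem measurable_seqCons [MeasurableSpace E] :
    Measurable fun z : E × (ℕ → E) => seqCons z.1 z.2 :=
  measurable_pi_lambda _ fun
    | 0 => measurable_fst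
    | n + 1 => (measurable_pi_apply n).comp measurable_snd

open ProbabilityTheory in
theorem map_seqCons_compProd_apply [MeasurableSpace E] (ρ : Measure E) [SFinite ρ]
    (K : Kernel E (ℕ → E)) [IsSFiniteKernel K] (n : ℕ) {s : ℕ → Set E}
    (hs : ∀ k, MeasurableSet (s k)) :
    (ρ ⊗ₘ K).map (fun z => seqCons z.1 z.2) {x | ∀ k < n + 1, x k ∈ s k} =
      ∫⁻ e in s 0, K e {x | ∀ k < n, x k ∈ s (k + 1)} ∂ρ := by
  have hpreimage : (fun z : E × (ℕ → E) => seqCons z.1 z.2) ⁻¹' {x | ∀ k < n + 1, x k ∈ s k} =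
      s 0 ×ˢ {x | ∀ k < n, x k ∈ s (k + 1)} := by
    ext z
    exact Nat.forall_lt_succ_left
  rw [Measure.map_apply measurable_seqCons (measurableSet_forall_lt_mem hs _), hpreimage,
    Measure.compProd_apply_prod (hs 0) (measurableSet_forall_lt_mem (fun k => hs (k + 1)) _)]

end SeqCons

section StepBoxes

theorem isPiSystem_range_singleton (α : Type*) : IsPiSystem (range fun a : α => ({a} : Set α)) := by
  rintro _ ⟨a, rfl⟩ _ ⟨b, rfl⟩ ⟨x, rfl, rfl⟩
  exact ⟨x, (inter_self _).symm⟩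

theorem isCountablySpanning_range_singleton (α : Type*) [Countable α] [Nonempty α] :
    IsCountablySpanning (range fun a : α => ({a} : Set α)) := by
  obtain ⟨f, hf⟩ := exists_surjective_nat α
  exact ⟨fun n => {f n}, fun _ => mem_range_self _,
    iUnion_eq_univ_iff.2 fun a => (hf a).imp fun n h => h.symm⟩

theorem generateFrom_range_singleton (α : Type*) [Countable α] [h : MeasurableSpace α]
    [MeasurableSingletonClass α] :
    MeasurableSpace.generateFrom (range fun a : α => ({a} : Set α)) = h := by
  refine le_antisymm (MeasurableSpace.generateFrom_le ?_) fun s _ => ?_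
  · rintro _ ⟨a, rfl⟩
    exact measurableSet_singleton a
  · rw [← biUnion_of_singleton s]
    exact .biUnion s.to_countable fun a _ =>
      MeasurableSpace.measurableSet_generateFrom (mem_range_self a)

theorem isCountablySpanning_range_Iic : IsCountablySpanning (range (Iic : ℝ → Set ℝ)) :=
  ⟨fun n => Iic n, fun _ => mem_range_self _, iUnion_eq_univ_iff.2 exists_nat_ge⟩

/-- The sets `{i} × (-∞, t] × {z}` on which the semi-Markov kernel `Q` prescribes the law of a
step. -/
def stepBoxes (X : Type*) : Set (Set (X × ℝ × Bool)) :=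
  image2 (· ×ˢ ·) (range fun i => {i}) (image2 (· ×ˢ ·) (range Iic) (range fun z => {z}))

variable {X : Type*}

theorem mem_stepBoxes {s : Set (X × ℝ × Bool)} :
    s ∈ stepBoxes X ↔ ∃ i t z, {i} ×ˢ Iic t ×ˢ {z} = s := by
  simp only [stepBoxes, mem_image2, exists_range_iff, exists_exists_exists_and_eq]

theorem isPiSystem_stepBoxes : IsPiSystem (stepBoxes X) :=
  (isPiSystem_range_singleton X).prod (isPiSystem_Iic.prod (isPiSystem_range_singleton Bool))

variable [Countable X] [Nonempty X]

theorem isCountablySpanning_stepBoxes : IsCountablySpanning (stepBoxes X) :=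
  (isCountablySpanning_range_singleton X).prod
    (isCountablySpanning_range_Iic.prod (isCountablySpanning_range_singleton Bool))

theorem generateFrom_stepBoxes [MeasurableSpace X] [MeasurableSingletonClass X] :
    MeasurableSpace.generateFrom (stepBoxes X) = Prod.instMeasurableSpace :=
  generateFrom_eq_prod (generateFrom_range_singleton X)
    (generateFrom_eq_prod ((borel_eq_generateFrom_Iic ℝ).symm.trans BorelSpace.measurable_eq.symm)
      (generateFrom_range_singleton Bool) isCountablySpanning_range_Iic
      (isCountablySpanning_range_singleton Bool))
    (isCountablySpanning_range_singleton X)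
    (isCountablySpanning_range_Iic.prod (isCountablySpanning_range_singleton Bool))

end StepBoxes

section MarkovRenewal

/-- A Markov renewal process with semi-Markov kernel `Q`: under `P i` the process starts at `i`,
and `Q` prescribes the joint law of the first `n` states, sojourn times and marks. -/
structure IsMarkovRenewal {X Ω : Type*} [MeasurableSpace X] [MeasurableSpace Ω] (η : ℕ → Ω → X)
    (κ : ℕ → Ω → ℝ) (ζ : ℕ → Ω → Bool) (P : X → Measure Ω) (Q : X → X → ℝ → Bool → ℝ) : Prop where
  isProbabilityMeasure : ∀ i, IsProbabilityMeasure (P i)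
  measurable : ∀ n, Measurable (η n) ∧ Measurable (κ n) ∧ Measurable (ζ n)
  sojourn_nonneg : ∀ n ω, 0 ≤ κ n ω
  measure_path : ∀ (n : ℕ) (I : ℕ → X) (T : ℕ → ℝ) (Z : ℕ → Bool),
    P (I 0) {ω | ∀ k ≤ n, (η k ω = I k ∧ (1 ≤ k → (κ k ω ≤ T k ∧ ζ k ω = Z k)))} =
      ENNReal.ofReal (∏ k ∈ Finset.Icc 1 n, Q (I (k - 1)) (I k) (T k) (Z k))

/-- The sequence of steps `(η_{n+1}, κ_{n+1}, ζ_{n+1})`, indexed from `0`. -/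
def trajectory {X Ω : Type*} (η : ℕ → Ω → X) (κ : ℕ → Ω → ℝ) (ζ : ℕ → Ω → Bool) (ω : Ω) (n : ℕ) :
    X × ℝ × Bool :=
  (η (n + 1) ω, κ (n + 1) ω, ζ (n + 1) ω)

namespace IsMarkovRenewal

variable {X Ω : Type*} [MeasurableSpace X] [MeasurableSpace Ω] {η : ℕ → Ω → X} {κ : ℕ → Ω → ℝ}
  {ζ : ℕ → Ω → Bool} {P : X → Measure Ω} {Q : X → X → ℝ → Bool → ℝ}
  (hR : IsMarkovRenewal η κ ζ P Q)

include hR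

theorem measurable_trajectory : Measurable (trajectory η κ ζ) :=
  measurable_pi_lambda _ fun n =>
    have ⟨hη, hκ, hζ⟩ := hR.measurable (n + 1)
    hη.prodMk (hκ.prodMk hζ)

theorem ae_state_zero_eq [MeasurableSingletonClass X] (i : X) : ∀ᵐ ω ∂P i, η 0 ω = i := by
  have := hR.isProbabilityMeasure i
  have hmeas : MeasurableSet {ω | η 0 ω = i} := (hR.measurable 0).1 (measurableSet_singleton i)
  refine (mem_ae_iff_prob_eq_one hmeas).2 ?_
  simpa using hR.measure_path 0 (fun _ => i) 0 fun _ => false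

theorem measure_forall_trajectory_mem [MeasurableSingletonClass X] (i : X) (n : ℕ) (J : ℕ → X)
    (T : ℕ → ℝ) (Z : ℕ → Bool) :
    P i {ω | ∀ k < n, trajectory η κ ζ ω k ∈ {J k} ×ˢ Iic (T k) ×ˢ {Z k}} =
      ENNReal.ofReal (∏ k ∈ Finset.range n, Q (seqCons i J k) (J k) (T k) (Z k)) := by
  have hpath := hR.measure_path n (seqCons i J) (seqCons 0 T) (seqCons false Z)
  simp only [← Finset.Ico_add_one_right_eq_Icc, Finset.prod_Ico_eq_prod_range,
    Nat.add_sub_cancel, add_comm 1, seqCons_zero, seqCons_succ] at hpath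
  rw [← hpath]
  refine measure_congr ?_
  filter_upwards [hR.ae_state_zero_eq i] with ω hω
  refine propext ⟨fun h k hk => ?_, fun h k hk => ?_⟩
  · cases k with
    | zero => exact ⟨hω, fun h0 => absurd h0 (Nat.not_succ_le_zero 0)⟩
    | succ k => exact ⟨(h k hk).1, fun _ => (h k hk).2⟩
  · exact ⟨(h (k + 1) hk).1, (h (k + 1) hk).2 k.succ_pos⟩

theorem measure_forall_trajectory_mem_succ [MeasurableSingletonClass X] (i : X) (n : ℕ) (J : ℕ → X)
    (T : ℕ → ℝ) (Z : ℕ → Bool) :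
    P i {ω | ∀ k < n + 1, trajectory η κ ζ ω k ∈ {J k} ×ˢ Iic (T k) ×ˢ {Z k}} =
      P i {ω | trajectory η κ ζ ω 0 ∈ {J 0} ×ˢ Iic (T 0) ×ˢ {Z 0}} *
        P (J 0) {ω | ∀ k < n,
          trajectory η κ ζ ω k ∈ {J (k + 1)} ×ˢ Iic (T (k + 1)) ×ˢ {Z (k + 1)}} := by
  have hfirst : P i {ω | trajectory η κ ζ ω 0 ∈ {J 0} ×ˢ Iic (T 0) ×ˢ {Z 0}} =
      ENNReal.ofReal (Q i (J 0) (T 0) (Z 0)) := by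
    simpa only [Nat.lt_one_iff, forall_eq, Finset.prod_range_one, seqCons_zero] using
      hR.measure_forall_trajectory_mem i 1 J T Z
  obtain hQ | hQ := le_or_gt 0 (Q i (J 0) (T 0) (Z 0))
  · have hlater := hR.measure_forall_trajectory_mem (J 0) n (fun k => J (k + 1))
      (fun k => T (k + 1)) (fun k => Z (k + 1))
    rw [seqCons_head_tail] at hlater
    simp only [hR.measure_forall_trajectory_mem i (n + 1) J T Z, Finset.prod_range_succ',
      seqCons_succ, seqCons_zero]
    rw [hfirst, hlater, ← ENNReal.ofReal_mul hQ, mul_comm]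
  · -- `ENNReal.ofReal` is multiplicative only for nonnegative factors, but here both sides vanish.
    rw [ENNReal.ofReal_of_nonpos hQ.le] at hfirst
    rw [hfirst, zero_mul]
    exact measure_mono_null (fun ω hω => hω 0 n.succ_pos) hfirst

end IsMarkovRenewal

section Regeneration

open ProbabilityTheory

variable {X Ω : Type*} [MeasurableSpace X] [MeasurableSpace Ω] [Countable X]
  [MeasurableSingletonClass X] {η : ℕ → Ω → X} {κ : ℕ → Ω → ℝ} {ζ : ℕ → Ω → Bool}
  {P : X → Measure Ω} {Q : X → X → ℝ → Bool → ℝ}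

/-- The law of the trajectory as a function of the initial state. -/
def trajectoryKernel (η : ℕ → Ω → X) (κ : ℕ → Ω → ℝ) (ζ : ℕ → Ω → Bool) (P : X → Measure Ω) :
    Kernel X (ℕ → X × ℝ × Bool) :=
  .ofFunOfCountable fun i => (P i).map (trajectory η κ ζ)

theorem trajectoryKernel_apply (i : X) :
    trajectoryKernel η κ ζ P i = (P i).map (trajectory η κ ζ) := rfl

namespace IsMarkovRenewal

variable (hR : IsMarkovRenewal η κ ζ P Q)

include hR

theorem isMarkovKernel_trajectoryKernel :
    IsMarkovKernel (trajectoryKernel η κ ζ P) := by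
  refine ⟨fun i => ?_⟩
  have := hR.isProbabilityMeasure i
  exact Measure.isProbabilityMeasure_map hR.measurable_trajectory.aemeasurable

theorem map_trajectory_eq_map_compProd (i : X) :
    (P i).map (trajectory η κ ζ) =
      (((P i).map fun ω => trajectory η κ ζ ω 0) ⊗ₘ
        (trajectoryKernel η κ ζ P).comap Prod.fst measurable_fst).map
          fun z => seqCons z.1 z.2 := by
  have : Nonempty X := ⟨i⟩
  have := hR.isProbabilityMeasure i
  have := hR.isMarkovKernel_trajectoryKernel
  have hy := hR.measurable_trajectory
  have hy0 : Measurable fun ω => trajectory η κ ζ ω 0 := (measurable_pi_apply 0).comp hy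
  have := Measure.isProbabilityMeasure_map (μ := P i) hy.aemeasurable
  have := Measure.isProbabilityMeasure_map (μ := P i) hy0.aemeasurable
  have := Measure.isProbabilityMeasure_map (μ := ((P i).map fun ω => trajectory η κ ζ ω 0) ⊗ₘ
        (trajectoryKernel η κ ζ P).comap Prod.fst measurable_fst) measurable_seqCons.aemeasurable
  refine measure_ext_of_forall_lt_mem generateFrom_stepBoxes isPiSystem_stepBoxes
    isCountablySpanning_stepBoxes ?_
  rintro (_ | n) s hs
  · simp only [Nat.not_lt_zero, false_imp_iff, implies_true, ofPred_true, measure_univ]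
  · choose J T Z hs using fun k => mem_stepBoxes.1 (hs k)
    obtain rfl : (fun k => {J k} ×ˢ Iic (T k) ×ˢ {Z k}) = s := funext hs
    have hbox : ∀ k, MeasurableSet ({J k} ×ˢ Iic (T k) ×ˢ {Z k}) := fun k =>
      (measurableSet_singleton _).prod (measurableSet_Iic.prod (measurableSet_singleton _))
    rw [map_seqCons_compProd_apply _ _ n hbox,
      Measure.map_apply hy (measurableSet_forall_lt_mem hbox _)]
    refine (hR.measure_forall_trajectory_mem_succ i n J T Z).trans ?_
    calc _ = ∫⁻ _ in {J 0} ×ˢ Iic (T 0) ×ˢ {Z 0}, P (J 0) {ω | ∀ k < n,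
          trajectory η κ ζ ω k ∈ {J (k + 1)} ×ˢ Iic (T (k + 1)) ×ˢ {Z (k + 1)}}
            ∂(P i).map fun ω => trajectory η κ ζ ω 0 := by
          rw [setLIntegral_const, Measure.map_apply hy0 (hbox 0), mul_comm]
          rfl
      _ = _ := setLIntegral_congr_fun (hbox 0) fun e he => by
          rw [Kernel.comap_apply, show e.1 = J 0 from he.1, trajectoryKernel_apply,
            Measure.map_apply hy (measurableSet_forall_lt_mem (fun k => hbox (k + 1)) n)]
          rfl

theorem integral_trajectory (i : X) {F : (ℕ → X × ℝ × Bool) → ℝ} (hF : Measurable F)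
    (hint : Integrable (fun ω => F (trajectory η κ ζ ω)) (P i)) :
    ∫ ω, F (trajectory η κ ζ ω) ∂P i =
      ∫ ω, ∫ ω', F (seqCons (trajectory η κ ζ ω 0) (trajectory η κ ζ ω')) ∂P (η 1 ω) ∂P i := by
  have := hR.isProbabilityMeasure i
  have := hR.isMarkovKernel_trajectoryKernel
  have hy := hR.measurable_trajectory
  have hy0 : Measurable fun ω => trajectory η κ ζ ω 0 := (measurable_pi_apply 0).comp hy
  have := Measure.isProbabilityMeasure_map (μ := P i) hy0.aemeasurable
  have hcons : AEMeasurable (fun z => seqCons z.1 z.2)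
      (((P i).map fun ω => trajectory η κ ζ ω 0) ⊗ₘ
        (trajectoryKernel η κ ζ P).comap Prod.fst measurable_fst) :=
    measurable_seqCons.aemeasurable
  have hint_cons : Integrable (fun z => F (seqCons z.1 z.2))
      (((P i).map fun ω => trajectory η κ ζ ω 0) ⊗ₘ
        (trajectoryKernel η κ ζ P).comap Prod.fst measurable_fst) := by
    have hint_map := (integrable_map_measure hF.aestronglyMeasurable hy.aemeasurable).2 hint
    rw [hR.map_trajectory_eq_map_compProd i] at hint_map
    exact (integrable_map_measure hF.aestronglyMeasurable hcons).1 hint_map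
  have hinner : StronglyMeasurable fun e => ∫ x, F (seqCons e x)
      ∂(trajectoryKernel η κ ζ P).comap Prod.fst measurable_fst e :=
    (hF.comp measurable_seqCons).stronglyMeasurable.integral_kernel_prod_right'
  calc ∫ ω, F (trajectory η κ ζ ω) ∂P i
      = ∫ z, F (seqCons z.1 z.2) ∂((P i).map fun ω => trajectory η κ ζ ω 0) ⊗ₘ
          (trajectoryKernel η κ ζ P).comap Prod.fst measurable_fst := by
        rw [← integral_map hy.aemeasurable hF.aestronglyMeasurable,
          hR.map_trajectory_eq_map_compProd i, integral_map hcons hF.aestronglyMeasurable]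
    _ = ∫ ω, ∫ x, F (seqCons (trajectory η κ ζ ω 0) x)
          ∂trajectoryKernel η κ ζ P (η 1 ω) ∂P i := by
        rw [Measure.integral_compProd hint_cons,
          integral_map hy0.aemeasurable hinner.aestronglyMeasurable]
        rfl
    _ = _ := integral_congr_ae (.of_forall fun ω => integral_map hy.aemeasurable
        (hF.comp (measurable_seqCons.comp measurable_prodMk_left)).aestronglyMeasurable)

end IsMarkovRenewal

end Regeneration

end MarkovRenewal

section Discount

theorem measurable_nat_sInf {α : Type*} [MeasurableSpace α] {p : α → ℕ → Prop}
    (hp : ∀ n, MeasurableSet {x | p x n}) : Measurable fun x => sInf {n | p x n} := by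
  refine measurable_to_countable' fun n => ?_
  have hpreimage : (fun x => sInf {n | p x n}) ⁻¹' {n} =
      {x | p x n ∧ (∀ k < n, ¬ p x k) ∨ n = 0 ∧ ∀ k, ¬ p x k} := by
    ext x
    constructor
    · rintro rfl
      by_cases hx : ∃ k, p x k
      · exact .inl ⟨Nat.sInf_mem hx, fun k hk => Nat.notMem_of_lt_sInf hk⟩
      · exact .inr ⟨Nat.sInf_eq_zero.2 (.inr (by simpa [eq_empty_iff_forall_notMem] using hx)),
          not_exists.1 hx⟩
    · rintro (⟨hn, hmin⟩ | ⟨rfl, hx⟩)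
      · exact le_antisymm (Nat.sInf_le hn)
          (le_csInf ⟨n, hn⟩ fun k hk => not_lt.1 fun hlt => hmin k hlt hk)
      · exact Nat.sInf_eq_zero.2 (.inr (by simpa [eq_empty_iff_forall_notMem] using hx))
  rw [hpreimage]
  measurability

theorem nat_sInf_eq_sInf_succ_add_one {p : ℕ → Prop} (h0 : ¬ p 0) (hp : ∃ n, p n) :
    sInf {n | p n} = sInf {n | p (n + 1)} + 1 := by
  refine (Nat.sInf_add (Nat.one_le_iff_ne_zero.2 fun h => ?_)).symm
  exact h0 (h ▸ Nat.sInf_mem hp)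

variable {X : Type*}

/-- The index of the first marked step of `x`, or `0` if no step is marked. -/
def firstMark (x : ℕ → X × ℝ × Bool) : ℕ :=
  sInf {n | (x n).2.2 = true}

/-- The total sojourn time up to and including the first marked step of `x`. -/
def rareTime (x : ℕ → X × ℝ × Bool) : ℝ :=
  ∑ k ∈ Finset.range (firstMark x + 1), (x k).2.1

open Classical in
/-- The integrand `exp (-s ξ)` of the Laplace transform of the first-rare-event time `ξ` along the
steps `x`, where `ξ = ∞`, that is `exp (-s ξ) = 0` even for `s = 0`, if no step is marked. -/
def discount (s : ℝ) (x : ℕ → X × ℝ × Bool) : ℝ :=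
  if ∃ n, (x n).2.2 = true then Real.exp (-(s * rareTime x)) else 0

theorem measurable_discount [MeasurableSpace X] (s : ℝ) :
    Measurable (discount (X := X) s) := by
  have hmark : ∀ n, MeasurableSet {x : ℕ → X × ℝ × Bool | (x n).2.2 = true} := fun n =>
    measurableSet_eq_fun (by fun_prop) measurable_const
  have hsum : Measurable fun z : ℕ × (ℕ → X × ℝ × Bool) =>
      ∑ k ∈ Finset.range (z.1 + 1), (z.2 k).2.1 :=
    measurable_from_prod_countable_right fun n =>
      Finset.measurable_sum (Finset.range (n + 1))
        (f := fun k (x : ℕ → X × ℝ × Bool) => (x k).2.1) fun k _ => by fun_prop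
  have hrareTime : Measurable (rareTime (X := X)) :=
    hsum.comp ((measurable_nat_sInf hmark).prodMk measurable_id)
  refine Measurable.ite ?_ (by fun_prop) measurable_const
  rw [ofPred_exists]
  exact .iUnion hmark

theorem discount_seqCons (s : ℝ) (e : X × ℝ × Bool) (x : ℕ → X × ℝ × Bool) :
    discount s (seqCons e x) = Real.exp (-(s * e.2.1)) * if e.2.2 then 1 else discount s x := by
  obtain ⟨i, t, z⟩ := e
  have hex : (∃ n, (seqCons (i, t, z) x n).2.2 = true) ↔ z = true ∨ ∃ n, (x n).2.2 = true :=
    Nat.or_exists_add_one.symm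
  cases z with
  | true =>
    have hfirst : firstMark (seqCons (i, t, true) x) = 0 := Nat.sInf_eq_zero.2 (.inl rfl)
    simp [discount, hex, rareTime, hfirst]
  | false =>
    by_cases hx : ∃ n, (x n).2.2 = true
    · have hfirst : firstMark (seqCons (i, t, false) x) = firstMark x + 1 :=
        nat_sInf_eq_sInf_succ_add_one (by simp) (hex.2 (.inr hx))
      have htime : rareTime (seqCons (i, t, false) x) = t + rareTime x := by
        rw [rareTime, hfirst, Finset.sum_range_succ', add_comm]
        rfl
      simp [discount, hex, hx, htime, mul_add, Real.exp_add, mul_comm]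
    · simp [discount, hex, hx]

theorem discount_nonneg (s : ℝ) (x : ℕ → X × ℝ × Bool) : 0 ≤ discount s x := by
  unfold discount
  positivity

theorem discount_le_one {s : ℝ} (hs : 0 ≤ s) {x : ℕ → X × ℝ × Bool} (hx : ∀ n, 0 ≤ (x n).2.1) :
    discount s x ≤ 1 := by
  have hrareTime : 0 ≤ s * rareTime x := mul_nonneg hs (Finset.sum_nonneg fun k _ => hx k)
  unfold discount
  split_ifs
  · exact Real.exp_le_one_iff.2 (neg_nonpos.2 hrareTime)
  · exact zero_le_one

theorem discount_trajectory {Ω : Type} (η : ℕ → Ω → X) (κ : ℝ → ℕ → Ω → ℝ)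
    (ζ : ℝ → ℕ → Ω → Bool) (s ε : ℝ) {ω : Ω} (hω : ∃ n, ζ ε (n + 1) ω = true) :
    discount s (trajectory η (κ ε) (ζ ε) ω) = Real.exp (-(s * xiRE κ ζ ε ω)) := by
  have hfirst : nuRE ζ ε ω = firstMark (trajectory η (κ ε) (ζ ε) ω) + 1 := by
    obtain ⟨n, hn⟩ := hω
    have := nat_sInf_eq_sInf_succ_add_one (p := fun n => 1 ≤ n ∧ ζ ε n ω = true) (by simp)
      ⟨n + 1, by simp, hn⟩
    simpa [nuRE, firstMark, trajectory] using this
  have htime : rareTime (trajectory η (κ ε) (ζ ε) ω) = xiRE κ ζ ε ω := by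
    rw [xiRE, hfirst, ← Finset.Ico_add_one_right_eq_Icc, Finset.sum_Ico_eq_sum_range]
    simp only [rareTime, trajectory, Nat.add_sub_cancel, add_comm 1]
  rw [discount, if_pos (by exact hω), htime]

end Discount

section Renewal

variable {X Ω : Type*} [MeasurableSpace Ω] {η : ℕ → Ω → X} {κ : ℕ → Ω → ℝ} {ζ : ℕ → Ω → Bool}
  {P : X → Measure Ω} {Q : X → X → ℝ → Bool → ℝ}

/-- `E_i exp (-s ξ)` for the first-rare-event time `ξ`, with the convention of `discount` when the
rare event never occurs. -/
def rareLaplace (η : ℕ → Ω → X) (κ : ℕ → Ω → ℝ) (ζ : ℕ → Ω → Bool) (P : X → Measure Ω) (s : ℝ)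
    (i : X) : ℝ :=
  ∫ ω, discount s (trajectory η κ ζ ω) ∂P i

theorem rareLaplace_nonneg (s : ℝ) (i : X) : 0 ≤ rareLaplace η κ ζ P s i :=
  integral_nonneg fun _ => discount_nonneg s _

namespace IsMarkovRenewal

section Integrability

variable [MeasurableSpace X] (hR : IsMarkovRenewal η κ ζ P Q) {s : ℝ}

include hR

theorem discount_trajectory_le_one (hs : 0 ≤ s) (ω : Ω) : discount s (trajectory η κ ζ ω) ≤ 1 :=
  discount_le_one hs fun n => hR.sojourn_nonneg (n + 1) ω

theorem integrable_discount (hs : 0 ≤ s) (i : X) :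
    Integrable (fun ω => discount s (trajectory η κ ζ ω)) (P i) := by
  have := hR.isProbabilityMeasure i
  refine .of_mem_Icc 0 1 ((measurable_discount s).comp hR.measurable_trajectory).aemeasurable
    (.of_forall fun ω => ⟨discount_nonneg s _, hR.discount_trajectory_le_one hs ω⟩)

theorem rareLaplace_le_one (hs : 0 ≤ s) (i : X) : rareLaplace η κ ζ P s i ≤ 1 := by
  have := hR.isProbabilityMeasure i
  calc rareLaplace η κ ζ P s i ≤ ∫ _, 1 ∂P i := integral_mono (hR.integrable_discount hs i)
        (integrable_const 1) (hR.discount_trajectory_le_one hs)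
    _ = 1 := by simp

theorem integrable_exp_neg_sojourn (hs : 0 ≤ s) (i : X) :
    Integrable (fun ω => Real.exp (-(s * κ 1 ω))) (P i) :=
  have := hR.isProbabilityMeasure i
  integrable_exp_neg_mul (hR.measurable 1).2.1.aemeasurable (.of_forall (hR.sojourn_nonneg 1)) hs

theorem lapSojourn_le_one (hs : 0 ≤ s) (i : X) : ∫ ω, Real.exp (-(s * κ 1 ω)) ∂P i ≤ 1 :=
  have := hR.isProbabilityMeasure i
  integral_exp_neg_mul_le_one (hR.measurable 1).2.1.aemeasurable
    (.of_forall (hR.sojourn_nonneg 1)) hs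

theorem measurableSet_exists_mark : MeasurableSet {ω | ∃ n, ζ (n + 1) ω = true} := by
  rw [ofPred_exists]
  exact .iUnion fun n => (hR.measurable (n + 1)).2.2 (measurableSet_singleton true)

theorem measureReal_exists_mark (i : X) :
    (P i).real {ω | ∃ n, ζ (n + 1) ω = true} = rareLaplace η κ ζ P 0 i := by
  rw [rareLaplace, ← integral_indicator_one hR.measurableSet_exists_mark]
  refine integral_congr_ae (.of_forall fun ω => ?_)
  simp only [discount, trajectory, zero_mul, neg_zero, Real.exp_zero]
  rfl

theorem integral_indicator_mark (i : X) :
    ∫ ω, {ω | ζ 1 ω = true}.indicator 1 ω ∂P i = (P i).real {ω | ζ 1 ω = true} :=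
  integral_indicator_one ((hR.measurable 1).2.2 (measurableSet_singleton true))

theorem integrable_indicator_mark (i : X) :
    Integrable ({ω | ζ 1 ω = true}.indicator (1 : Ω → ℝ)) (P i) := by
  have := hR.isProbabilityMeasure i
  exact (integrable_const 1).indicator ((hR.measurable 1).2.2 (measurableSet_singleton true))

end Integrability

variable [MeasurableSpace X] [MeasurableSingletonClass X] (hR : IsMarkovRenewal η κ ζ P Q) {s : ℝ}

include hR

theorem rareLaplace_eq [Countable X] (hs : 0 ≤ s) (i : X) :
    rareLaplace η κ ζ P s i = ∫ ω, Real.exp (-(s * κ 1 ω)) *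
      (if ζ 1 ω then 1 else rareLaplace η κ ζ P s (η 1 ω)) ∂P i := by
  rw [rareLaplace, hR.integral_trajectory i (measurable_discount s) (hR.integrable_discount hs i)]
  refine integral_congr_ae (.of_forall fun ω => ?_)
  have := hR.isProbabilityMeasure (η 1 ω)
  simp only [discount_seqCons, integral_const_mul, trajectory, zero_add]
  split_ifs <;> simp [rareLaplace]

theorem integrable_renewal [Countable X] (hs : 0 ≤ s) (i : X) :
    Integrable (fun ω => Real.exp (-(s * κ 1 ω)) *
      (if ζ 1 ω then 1 else rareLaplace η κ ζ P s (η 1 ω))) (P i) := by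
  have := hR.isProbabilityMeasure i
  obtain ⟨hη, hκ, hζ⟩ := hR.measurable 1
  have hmeas : Measurable fun ω => if ζ 1 ω then 1 else rareLaplace η κ ζ P s (η 1 ω) :=
    .ite (hζ (measurableSet_singleton true)) measurable_const
      ((measurable_of_countable (rareLaplace η κ ζ P s)).comp hη)
  refine .of_mem_Icc 0 1 (by fun_prop) (.of_forall fun ω => ?_)
  have hexp := exp_neg_mul_le_one hs (hR.sojourn_nonneg 1 ω)
  have hcases : (if ζ 1 ω then 1 else rareLaplace η κ ζ P s (η 1 ω)) ∈ Icc 0 1 := by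
    split_ifs
    · exact ⟨zero_le_one, le_rfl⟩
    · exact ⟨rareLaplace_nonneg _ _, hR.rareLaplace_le_one hs _⟩
  exact ⟨mul_nonneg (Real.exp_nonneg _) hcases.1, mul_le_one₀ hexp hcases.1 hcases.2⟩

theorem integral_comp_state_one [Fintype X] (f : X → ℝ) (i : X) :
    ∫ ω, f (η 1 ω) ∂P i = ∑ j, (P i).real {ω | η 1 ω = j} * f j := by
  have := hR.isProbabilityMeasure i
  have hη := (hR.measurable 1).1
  rw [← integral_map hη.aemeasurable (measurable_of_countable f).aestronglyMeasurable,
    integral_fintype .of_finite]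
  refine Finset.sum_congr rfl fun j _ => ?_
  rw [map_measureReal_apply hη (measurableSet_singleton j)]
  rfl

theorem integrable_comp_state_one [Finite X] (f : X → ℝ) (i : X) :
    Integrable (fun ω => f (η 1 ω)) (P i) := by
  have := hR.isProbabilityMeasure i
  have := Measure.isProbabilityMeasure_map (μ := P i) (hR.measurable 1).1.aemeasurable
  exact (Integrable.of_finite (f := f)).comp_measurable (hR.measurable 1).1

theorem rareLaplace_le_add_sum [Fintype X] (hs : 0 ≤ s) (i : X) :
    rareLaplace η κ ζ P s i ≤ (P i).real {ω | ζ 1 ω = true} +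
      ∑ j, (P i).real {ω | η 1 ω = j} * rareLaplace η κ ζ P s j := by
  rw [hR.rareLaplace_eq hs i, ← hR.integral_indicator_mark, ← hR.integral_comp_state_one,
    ← integral_add (hR.integrable_indicator_mark i) (hR.integrable_comp_state_one _ i)]
  refine integral_mono (hR.integrable_renewal hs i)
    ((hR.integrable_indicator_mark i).add (hR.integrable_comp_state_one _ i)) fun ω => ?_
  have hexp := exp_neg_mul_le_one hs (hR.sojourn_nonneg 1 ω)
  by_cases hω : ζ 1 ω = true
  · simpa [hω] using hexp.trans (le_add_of_nonneg_right (rareLaplace_nonneg _ _))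
  · simpa [hω] using mul_le_of_le_one_left (rareLaplace_nonneg _ _) hexp

theorem rareLaplace_le_add_mul [Countable X] (hs : 0 ≤ s) {M : ℝ}
    (hM : ∀ j, rareLaplace η κ ζ P s j ≤ M) (i : X) :
    rareLaplace η κ ζ P s i ≤ (P i).real {ω | ζ 1 ω = true} +
      (∫ ω, Real.exp (-(s * κ 1 ω)) ∂P i) * M := by
  have hint := (hR.integrable_exp_neg_sojourn hs i).mul_const M
  rw [hR.rareLaplace_eq hs i, ← hR.integral_indicator_mark, ← integral_mul_const,
    ← integral_add (hR.integrable_indicator_mark i) hint]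
  refine integral_mono (hR.integrable_renewal hs i)
    ((hR.integrable_indicator_mark i).add hint) fun ω => ?_
  have hM0 : 0 ≤ M := (rareLaplace_nonneg s i).trans (hM i)
  by_cases hω : ζ 1 ω = true
  · simpa [hω] using (exp_neg_mul_le_one hs (hR.sojourn_nonneg 1 ω)).trans
      (le_add_of_nonneg_right (mul_nonneg (Real.exp_nonneg _) hM0))
  · simpa [hω] using mul_le_mul_of_nonneg_left (hM (η 1 ω)) (Real.exp_nonneg _)

theorem sum_mul_le_rareLaplace_zero [Fintype X] (i : X) :
    ∑ j, (P i).real {ω | η 1 ω = j} * rareLaplace η κ ζ P 0 j ≤ rareLaplace η κ ζ P 0 i := by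
  rw [hR.rareLaplace_eq le_rfl i, ← hR.integral_comp_state_one]
  refine integral_mono (hR.integrable_comp_state_one _ i) (hR.integrable_renewal le_rfl i)
    fun ω => ?_
  by_cases hω : ζ 1 ω = true <;> simp [hω, hR.rareLaplace_le_one le_rfl]

theorem one_sub_rareLaplace_zero_le_mul [Countable X] {M : ℝ}
    (hM : ∀ j, 1 - rareLaplace η κ ζ P 0 j ≤ M) (i : X) :
    1 - rareLaplace η κ ζ P 0 i ≤ (1 - (P i).real {ω | ζ 1 ω = true}) * M := by
  have := hR.isProbabilityMeasure i
  have hmark := (hR.integrable_indicator_mark i).mul_const M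
  have hlower : ∫ ω, (1 - M) + {ω | ζ 1 ω = true}.indicator 1 ω * M ∂P i ≤
      rareLaplace η κ ζ P 0 i := by
    rw [hR.rareLaplace_eq le_rfl i]
    refine integral_mono ((integrable_const _).add hmark) (hR.integrable_renewal le_rfl i)
      fun ω => ?_
    by_cases hω : ζ 1 ω = true
    · simp [hω]
    · simpa [hω] using sub_le_comm.1 (hM (η 1 ω))
  rw [integral_add (integrable_const _) hmark, integral_mul_const, hR.integral_indicator_mark,
    integral_const, probReal_univ, one_smul] at hlower
  linarith

theorem sum_measureReal_state_one_eq_one [Fintype X] (i : X) :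
    ∑ j, (P i).real {ω | η 1 ω = j} = 1 := by
  have := hR.isProbabilityMeasure i
  simpa using (hR.integral_comp_state_one (fun _ => 1) i).symm

section RingChain

variable [Finite X] {C : ℝ} {N : ℕ} (hC0 : 0 < C) (hC1 : C ≤ 1)
  (hring : HasRingChain (fun i j => (P i).real {ω | η 1 ω = j}) C N)

include hC0 hC1 hring

theorem ae_exists_mark {i₀ : X} (hi₀ : 0 < (P i₀).real {ω | ζ 1 ω = true}) (i : X) :
    ∀ᵐ ω ∂P i, ∃ n, ζ (n + 1) ω = true := by
  cases nonempty_fintype X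
  have := hR.isProbabilityMeasure i
  have hsub : ∀ k, 1 - rareLaplace η κ ζ P 0 k ≤
      0 + ∑ j, (P k).real {ω | η 1 ω = j} * (1 - rareLaplace η κ ζ P 0 j) := fun k => by
    simp only [mul_sub, mul_one, Finset.sum_sub_distrib, hR.sum_measureReal_state_one_eq_one]
    linarith [hR.sum_mul_le_rareLaplace_zero k]
  have hprinciple := hring.maximum_principle hC0.le hC1 le_rfl (fun _ _ => measureReal_nonneg)
    hR.sum_measureReal_state_one_eq_one hsub (sub_le_self 1 hi₀.le)
    (fun M hM => (zero_add (_ * M)).symm ▸ hR.one_sub_rareLaplace_zero_le_mul hM i₀) i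
  rw [sub_sub_cancel, mul_zero] at hprinciple
  have hone : rareLaplace η κ ζ P 0 i = 1 := (hR.rareLaplace_le_one le_rfl i).antisymm
    (sub_nonpos.1 (nonpos_of_mul_nonpos_right hprinciple (by positivity)))
  rw [← hR.measureReal_exists_mark i, measureReal_def, ENNReal.toReal_eq_one_iff] at hone
  exact (mem_ae_iff_prob_eq_one hR.measurableSet_exists_mark).2 hone

theorem pow_mul_one_sub_mul_rareLaplace_le {r s : ℝ} (hs : 0 ≤ s)
    (hr : ∀ i, (P i).real {ω | ζ 1 ω = true} ≤ r) (i j : X) :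
    C ^ (2 * N) * (1 - ∫ ω, Real.exp (-(s * κ 1 ω)) ∂P i) * rareLaplace η κ ζ P s j ≤
      (2 * N + 1) * r := by
  cases nonempty_fintype X
  exact hring.maximum_principle hC0.le hC1 (measureReal_nonneg.trans (hr i))
    (fun _ _ => measureReal_nonneg) hR.sum_measureReal_state_one_eq_one
    (fun k => (hR.rareLaplace_le_add_sum hs k).trans (by gcongr; exact hr k))
    (hR.lapSojourn_le_one hs i)
    (fun _ hM => (hR.rareLaplace_le_add_mul hs hM i).trans (by gcongr; exact hr i)) j

end RingChain

end IsMarkovRenewal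

end Renewal

section Mixture

variable {m : ℕ} {Ω : Type} [MeasurableSpace Ω] {η : ℕ → Ω → Fin m} {κ : ℝ → ℕ → Ω → ℝ}
  {ζ : ℝ → ℕ → Ω → Bool} {P : Fin m → Measure Ω} {Q : Fin m → Fin m → ℝ → Bool → ℝ} {ε : ℝ}

theorem IsMarkovRenewal.integral_exp_neg_mul_xiRE
    (hR : IsMarkovRenewal η (κ ε) (ζ ε) P Q)
    (hmark : ∀ i, ∀ᵐ ω ∂P i, ∃ n, ζ ε (n + 1) ω = true) {q : Fin m → ℝ} (hq : ∀ i, 0 ≤ q i)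
    {s : ℝ} (hs : 0 ≤ s) :
    ∫ ω, Real.exp (-(s * xiRE κ ζ ε ω)) ∂(∑ i, ENNReal.ofReal (q i) • P i) =
      ∑ i, q i * rareLaplace η (κ ε) (ζ ε) P s i := by
  have hlink : ∀ i, (fun ω => discount s (trajectory η (κ ε) (ζ ε) ω)) =ᵐ[P i]
      fun ω => Real.exp (-(s * xiRE κ ζ ε ω)) := fun i =>
    (hmark i).mono fun ω hω => discount_trajectory η κ ζ s ε hω
  rw [integral_finsetSum_measure fun i _ =>
    ((hR.integrable_discount hs i).congr (hlink i)).smul_measure ENNReal.ofReal_ne_top]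
  refine Finset.sum_congr rfl fun i _ => ?_
  rw [integral_smul_measure, ENNReal.toReal_ofReal (hq i), smul_eq_mul, rareLaplace,
    integral_congr_ae (hlink i)]

theorem IsMarkovRenewal.pow_mul_one_sub_mul_integral_exp_neg_mul_xiRE_le
    (hR : IsMarkovRenewal η (κ ε) (ζ ε) P Q) {C : ℝ} {N : ℕ} (hC0 : 0 < C) (hC1 : C ≤ 1)
    (hring : HasRingChain (fun i j => (P i).real {ω | η 1 ω = j}) C N)
    (hpos : ∃ i, 0 < (P i).real {ω | ζ ε 1 ω = true}) {r : ℝ}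
    (hr : ∀ i, (P i).real {ω | ζ ε 1 ω = true} ≤ r) {q : Fin m → ℝ} (hq : ∀ i, 0 ≤ q i)
    (hq1 : ∑ i, q i = 1) {s : ℝ} (hs : 0 ≤ s) (i : Fin m) :
    C ^ (2 * N) * (1 - ∫ ω, Real.exp (-(s * κ ε 1 ω)) ∂P i) *
        ∫ ω, Real.exp (-(s * xiRE κ ζ ε ω)) ∂(∑ j, ENNReal.ofReal (q j) • P j) ≤
      (2 * N + 1) * r := by
  obtain ⟨i₀, hi₀⟩ := hpos
  rw [hR.integral_exp_neg_mul_xiRE (hR.ae_exists_mark hC0 hC1 hring hi₀) hq hs]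
  set D := C ^ (2 * N) * (1 - ∫ ω, Real.exp (-(s * κ ε 1 ω)) ∂P i)
  calc D * ∑ j, q j * rareLaplace η (κ ε) (ζ ε) P s j
      = ∑ j, q j * (D * rareLaplace η (κ ε) (ζ ε) P s j) := by
        rw [Finset.mul_sum]
        exact Finset.sum_congr rfl fun j _ => mul_left_comm _ _ _
    _ ≤ ∑ j, q j * ((2 * N + 1) * r) := by
        refine Finset.sum_le_sum fun j _ => mul_le_mul_of_nonneg_left ?_ (hq j)
        exact hR.pow_mul_one_sub_mul_rareLaplace_le hC0 hC1 hring hs hr i j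
    _ = (2 * N + 1) * r := by rw [← Finset.sum_mul, hq1, one_mul]

end Mixture

section Convergence

variable {m : ℕ} {ε₀ : ℝ} {Ω : Type} [MeasurableSpace Ω] {η : ℝ → ℕ → Ω → Fin m}
  {κ : ℝ → ℕ → Ω → ℝ} {ζ : ℝ → ℕ → Ω → Bool} {Pstart : ℝ → Fin m → Measure Ω}
  {Q : ℝ → Fin m → Fin m → ℝ → Bool → ℝ} {p : ℝ → Fin m → Fin m → ℝ} {q : ℝ → Fin m → ℝ}
  {Pq : ℝ → Measure Ω}
  (hε₀ : 0 < ε₀)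
  (hR : ∀ ε ∈ Ioc 0 ε₀, IsMarkovRenewal (η ε) (κ ε) (ζ ε) (Pstart ε) (Q ε))
  (hp : ∀ ε ∈ Ioc 0 ε₀, ∀ i j, p ε i j = (Pstart ε i {ω | η ε 1 ω = j}).toReal)
  (hB : CondB p) (hA1 : ∀ ε ∈ Ioc 0 ε₀, ∃ i, 0 < rareP Pstart ζ ε i)
  (hA2 : ∀ i, Tendsto (fun ε => rareP Pstart ζ ε i) (𝓝[>] 0) (𝓝 0))
  (hq : ∀ ε ∈ Ioc 0 ε₀, (∀ i, 0 ≤ q ε i) ∧ ∑ i, q ε i = 1)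
  (hmix : ∀ ε ∈ Ioc 0 ε₀, Pq ε = ∑ i, ENNReal.ofReal (q ε i) • Pstart ε i)

include hε₀ hR hp hB hA1 hA2 hq hmix

theorem tendsto_laplace_sojourn_of_le_laplace {s L : ℝ} (hs : 0 ≤ s) (hL0 : 0 < L)
    (hL : ∀ᶠ ε in 𝓝[>] 0, L ≤ ∫ ω, Real.exp (-(s * xiRE κ ζ ε ω)) ∂Pq ε) (i : Fin m) :
    Tendsto (fun ε => ∫ ω, Real.exp (-(s * κ ε 1 ω)) ∂Pstart ε i) (𝓝[>] 0) (𝓝 1) := by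
  have hIoc : ∀ᶠ ε in 𝓝[>] 0, ε ∈ Ioc 0 ε₀ := Ioc_mem_nhdsGT hε₀
  obtain ⟨N, C, hC0, hC1, hring⟩ := hB.exists_eventually_hasRingChain
    (hIoc.mono fun ε hε i j => hp ε hε i j ▸ ENNReal.toReal_nonneg)
  have hD : 0 < C ^ (2 * N) * L := by positivity
  have hbound : ∀ᶠ ε in 𝓝[>] 0, 1 - ∫ ω, Real.exp (-(s * κ ε 1 ω)) ∂Pstart ε i ≤
      (2 * N + 1) * (∑ j, rareP Pstart ζ ε j) / (C ^ (2 * N) * L) := by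
    filter_upwards [hIoc, hring, hL] with ε hε hring hL
    rw [hmix ε hε] at hL
    rw [show p ε = fun i j => (Pstart ε i).real {ω | η ε 1 ω = j} from funext₂ (hp ε hε)] at hring
    have hgap := sub_nonneg.2 ((hR ε hε).lapSojourn_le_one hs i)
    have hrare : ∀ j, rareP Pstart ζ ε j ≤ ∑ j, rareP Pstart ζ ε j := fun j =>
      Finset.single_le_sum (f := rareP Pstart ζ ε) (fun _ _ => ENNReal.toReal_nonneg)
        (Finset.mem_univ j)
    rw [le_div_iff₀ hD]
    calc _ = C ^ (2 * N) * (1 - ∫ ω, Real.exp (-(s * κ ε 1 ω)) ∂Pstart ε i) * L := by ring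
      _ ≤ _ := mul_le_mul_of_nonneg_left hL (by positivity)
      _ ≤ _ := (hR ε hε).pow_mul_one_sub_mul_integral_exp_neg_mul_xiRE_le hC0 hC1
        hring (hA1 ε hε) hrare (hq ε hε).1 (hq ε hε).2 hs i
  have hlimit : Tendsto (fun ε => 1 - (2 * N + 1) * (∑ j, rareP Pstart ζ ε j) / (C ^ (2 * N) * L))
      (𝓝[>] 0) (𝓝 1) := by
    simpa using (((tendsto_finsetSum Finset.univ fun j _ => hA2 j).const_mul
      (2 * N + 1 : ℝ)).div_const (C ^ (2 * N) * L)).const_sub 1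
  exact tendsto_of_tendsto_of_tendsto_of_le_of_le' hlimit tendsto_const_nhds
    (hbound.mono fun ε h => sub_le_comm.1 h)
    (hIoc.mono fun ε hε => (hR ε hε).lapSojourn_le_one hs i)

/-- The hypothesis `hmass` says that `ξ_ε` stays bounded with probability bounded away from `0`. -/
theorem stmt19_general
    (hmass : ∃ s > 0, ∃ L > 0, ∀ᶠ ε in 𝓝[>] 0,
      L ≤ ∫ ω, Real.exp (-(s * xiRE κ ζ ε ω)) ∂Pq ε) :
    (∀ i, ∀ δ > 0, Tendsto (fun ε => (Pstart ε i {ω | δ < κ ε 1 ω}).toReal) (𝓝[>] 0) (𝓝 0)) ∧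
    (∀ i s, 0 ≤ s →
      Tendsto (fun ε => ∫ ω, Real.exp (-(s * κ ε 1 ω)) ∂Pstart ε i) (𝓝[>] 0) (𝓝 1)) := by
  obtain ⟨s, hs, L, hL0, hL⟩ := hmass
  have hlap := tendsto_laplace_sojourn_of_le_laplace hε₀ hR hp hB hA1 hA2 hq hmix hs.le hL0 hL
  have hsojourn : ∀ i, ∀ᶠ ε in 𝓝[>] 0,
      IsProbabilityMeasure (Pstart ε i) ∧ Measurable (κ ε 1) ∧ 0 ≤ᵐ[Pstart ε i] κ ε 1 := fun i => by
    filter_upwards [Ioc_mem_nhdsGT hε₀] with ε hε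
    exact ⟨(hR ε hε).isProbabilityMeasure i, ((hR ε hε).measurable 1).2.1,
      .of_forall ((hR ε hε).sojourn_nonneg 1)⟩
  exact ⟨fun i _ hδ => tendsto_measureReal_lt_of_tendsto_laplace (hsojourn i) hs (hlap i) hδ,
    fun i _ ht => tendsto_laplace_of_tendsto_laplace (hsojourn i) hs (hlap i) ht⟩

end Convergence

/-- under conditions A and B, if the first-rare-event times `ξ_ε` converge
in distribution (for some family of initial distributions) to a proper nonnegative random
variable with law `μ`, then the sojourn times vanish asymptotically:
`P_i(κ_{ε,1} > δ) → 0` for every `δ > 0` and `i ∈ X`; equivalently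
`φ_{ε,i}(s) = E_i e^{−sκ_{ε,1}} → 1` for every `s ≥ 0` and `i ∈ X`. -/
theorem stmt19 {m : ℕ} (hm : 0 < m) (ε₀ : ℝ) (hε₀ : 0 < ε₀)
    {Ω : Type} [MeasurableSpace Ω]
    (η : ℝ → ℕ → Ω → Fin m) (κ : ℝ → ℕ → Ω → ℝ) (ζ : ℝ → ℕ → Ω → Bool)
    (Pstart : ℝ → Fin m → Measure Ω)
    (hprob : ∀ ε i, IsProbabilityMeasure (Pstart ε i))
    (hmeas : ∀ ε n, Measurable (η ε n) ∧ Measurable (κ ε n) ∧ Measurable (ζ ε n))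
    (hκnn : ∀ ε n ω, 0 ≤ κ ε n ω)
    (Q : ℝ → Fin m → Fin m → ℝ → Bool → ℝ)
    (hMRP : ∀ ε ∈ Ioc (0:ℝ) ε₀, ∀ n : ℕ, ∀ I : ℕ → Fin m, ∀ T : ℕ → ℝ, ∀ Z : ℕ → Bool,
      Pstart ε (I 0)
          {ω | ∀ k ≤ n, (η ε k ω = I k ∧ (1 ≤ k → (κ ε k ω ≤ T k ∧ ζ ε k ω = Z k)))}
        = ENNReal.ofReal (∏ k ∈ Finset.Icc 1 n, Q ε (I (k - 1)) (I k) (T k) (Z k)))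
    (p : ℝ → Fin m → Fin m → ℝ)
    (hp : ∀ ε ∈ Ioc (0:ℝ) ε₀, ∀ i j, p ε i j = (Pstart ε i {ω | η ε 1 ω = j}).toReal)
    (hB : CondB p)
    (π : ℝ → Fin m → ℝ)
    (hπ : ∀ᶠ ε in 𝓝[>] (0:ℝ), IsStationaryDist (fun i j => p ε i j) (π ε))
    -- condition A
    (hA1 : ∀ ε ∈ Ioc (0:ℝ) ε₀, ∃ i, 0 < rareP Pstart ζ ε i)
    (hA2 : ∀ i, Tendsto (fun ε => rareP Pstart ζ ε i) (𝓝[>] (0:ℝ)) (𝓝 0))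
    -- some family of initial distributions
    (q : ℝ → Fin m → ℝ) (Pq : ℝ → Measure Ω)
    (hq : ∀ ε ∈ Ioc (0:ℝ) ε₀, (∀ i, 0 ≤ q ε i) ∧ ∑ i, q ε i = 1)
    (hmix : ∀ ε ∈ Ioc (0:ℝ) ε₀, Pq ε = ∑ i, ENNReal.ofReal (q ε i) • Pstart ε i)
    -- ξ_ε converges in distribution to a proper nonnegative random variable with law μ
    (μ : Measure ℝ) (hμprob : IsProbabilityMeasure μ) (hμnn : μ (Iio 0) = 0)
    (hconv : ∀ s > 0, Tendsto (fun ε => ∫ ω, Real.exp (-(s * xiRE κ ζ ε ω)) ∂(Pq ε))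
      (𝓝[>] (0:ℝ)) (𝓝 (∫ x, Real.exp (-(s * x)) ∂μ))) :
    (∀ i : Fin m, ∀ δ > (0:ℝ),
      Tendsto (fun ε => (Pstart ε i {ω | δ < κ ε 1 ω}).toReal) (𝓝[>] (0:ℝ)) (𝓝 0)) ∧
    (∀ i : Fin m, ∀ s : ℝ, 0 ≤ s →
      Tendsto (fun ε => ∫ ω, Real.exp (-(s * κ ε 1 ω)) ∂(Pstart ε i))
        (𝓝[>] (0:ℝ)) (𝓝 1)) := by
  exact stmt19_general hε₀ (fun ε hε => ⟨hprob ε, hmeas ε, hκnn ε, hMRP ε hε⟩) hp hB hA1 hA2 hq hmix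
    (exists_eventually_le_laplace hμnn hconv)
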